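/- Let s₁ ∈ (0,1), let J be an open subinterval of (s₁^((q−1)/(p−1)), 1), and let t : J → ℝ be differentiable and such that for every s₂ ∈ J one has 1 ≤ t(s₂), τ(s₂) := τ(s₁,s₂,t(s₂)) ∈ (0,1), and (s₁, s₂, t(s₂)) satisfies the defining equation. Then for every s₂ ∈ J: t′(s₂)·(p−q)·t(s₂)^(p−q−1)·Δ₁(s₂) = (s₁/s₂²)·F(τ(s₂)) − (p−q)·(s₁/s₂)·(ω_q(s₂)/((q−1)(ω_q(s₂)−1)) + ω_q(s₂)^q/s₂), where Δ₁(s₂) := q·(p − (p−1)·ω_q(τ(s₂)))·ω_q(τ(s₂))^(q−1) + (p − (q(p−1)/(q−1))·ω_q(τ(s₂)))·(τ(s₂) − t(s₂)^q)/(ω_q(τ(s₂)) − 1). -/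

import Mathlib

noncomputable section

open Real Set

/-- `H r z = r·z^(r-1) - (r-1)·z^r`. -/
def H (r z : ℝ) : ℝ := r * z ^ (r - 1) - (r - 1) * z ^ r

/-- `ω` is the inverse of `H r`, mapping `(0,1]` into `[1, r/(r-1))`,
    so that `H r (ω s) = s` for `s ∈ (0,1]`. -/
def IsOmega (r : ℝ) (ω : ℝ → ℝ) : Prop :=
  ∀ s ∈ Set.Ioc (0 : ℝ) 1, ω s ∈ Set.Ico (1 : ℝ) (r / (r - 1)) ∧ H r (ω s) = s

/-- `τ(s₁,s₂,t) = ((p-q)/p)·(t^p - s₁)/(t^(p-q) - s₁/s₂)`. -/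
def tau (p q s₁ s₂ t : ℝ) : ℝ :=
  ((p - q) / p) * ((t ^ p - s₁) / (t ^ (p - q) - s₁ / s₂))

/-- `F(τ)` from the paper, where `ω` plays the role of `ω_q`. -/
def Ffun (p q : ℝ) (ω : ℝ → ℝ) (τ : ℝ) : ℝ :=
  (τ / (1 - ω τ)) * (p - (q * (p - 1) / (q - 1)) * ω τ)
    - q * (p * ω τ ^ (q - 1) - (p - 1) * ω τ ^ q)

/-- `A(s)` from the paper, where `ω` plays the role of `ω_q`. -/
def Afun (q : ℝ) (ω : ℝ → ℝ) (s : ℝ) : ℝ :=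
  s * (ω s / ((q - 1) * (ω s - 1)) + ω s ^ q / s)

/-!
Writing `τ` for `tau p q s₁ s (t s)`, `D = t ^ (p - q) - s₁ / s` and
`u = t' * (p - q) * t ^ (p - q - 1)`, the quotient rule gives
`D * τ' = (t ^ q - τ) * u - τ * s₁ / s ^ 2`, since `τ * D` is proportional to `t ^ p - s₁`.
The inverse function theorem gives `ω' = 1 / (q * (q - 1) * ω ^ (q - 2) * (1 - ω))`, so that the
powers of `ω` cancel in the derivatives of `q * (p * ω ^ (q - 1) - (p - 1) * ω ^ q)` and `ω ^ q`.
Differentiating the defining equation and collecting the multiples of `u` yields the identity.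
-/

open scoped Topology

/-- The function `p·z^(q-1) - (p-1)·z^q` of the defining equation, a two-parameter version of `H`
with `genH r r = H r`. -/
def genH (p q z : ℝ) : ℝ := p * z ^ (q - 1) - (p - 1) * z ^ q

/-- The derivative of `s ↦ q * genH p q (ω s)`, for `ω` inverse to `H q`, in terms of
`z = ω s`. -/
def genHSlope (p q z : ℝ) : ℝ := (p - q * (p - 1) / (q - 1) * z) / (1 - z)

theorem Ffun_eq_mul_genHSlope_sub (p q : ℝ) (ω : ℝ → ℝ) (τ : ℝ) :
    Ffun p q ω τ = τ * genHSlope p q (ω τ) - q * genH p q (ω τ) := by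
  rw [Ffun, genHSlope, genH]
  ring

theorem rpow_eq_rpow_sub_one_mul {z : ℝ} (hz : z ≠ 0) (r : ℝ) : z ^ r = z ^ (r - 1) * z := by
  rw [← rpow_add_one hz, sub_add_cancel]

theorem genH_eq_mul_rpow (p q : ℝ) {z : ℝ} (hz : z ≠ 0) :
    genH p q z = (p - (p - 1) * z) * z ^ (q - 1) := by
  rw [genH, rpow_eq_rpow_sub_one_mul hz q]
  ring

theorem hasStrictDerivAt_genH (p q : ℝ) {z : ℝ} (hz : z ≠ 0) :
    HasStrictDerivAt (genH p q) (z ^ (q - 2) * (p * (q - 1) - q * (p - 1) * z)) z := by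
  refine (((hasStrictDerivAt_rpow_const_of_ne hz (q - 1)).const_mul p).sub
    ((hasStrictDerivAt_rpow_const_of_ne hz q).const_mul (p - 1))).congr_deriv ?_
  rw [rpow_eq_rpow_sub_one_mul hz (q - 1), show q - 1 - 1 = q - 2 by ring]
  ring

theorem hasStrictDerivAt_H (r : ℝ) {z : ℝ} (hz : z ≠ 0) :
    HasStrictDerivAt (H r) (r * (r - 1) * z ^ (r - 2) * (1 - z)) z :=
  (hasStrictDerivAt_genH r r hz).congr_deriv (by ring)

theorem strictAntiOn_H {r : ℝ} (hr : 1 < r) : StrictAntiOn (H r) (Ici 1) := by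
  refine strictAntiOn_of_deriv_neg (convex_Ici 1) (fun z hz => ?_) (fun z hz => ?_)
  · have hz0 : z ≠ 0 := (zero_lt_one.trans_le hz).ne'
    exact (hasStrictDerivAt_H r hz0).hasDerivAt.continuousAt.continuousWithinAt
  · rw [interior_Ici, mem_Ioi] at hz
    have hz0 : 0 < z := zero_lt_one.trans hz
    rw [(hasStrictDerivAt_H r hz0.ne').hasDerivAt.deriv]
    have hpos : 0 < r * (r - 1) * z ^ (r - 2) :=
      mul_pos (mul_pos (by linarith) (by linarith)) (rpow_pos_of_pos hz0 _)
    exact mul_neg_of_pos_of_neg hpos (by linarith)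

namespace IsOmega

variable {r : ℝ} {ω : ℝ → ℝ} {s : ℝ}

theorem one_lt_apply (hω : IsOmega r ω) (hs : s ∈ Ioo (0 : ℝ) 1) : 1 < ω s := by
  obtain ⟨⟨hle, -⟩, hH⟩ := hω s (Ioo_subset_Ioc_self hs)
  refine hle.lt_of_ne fun h => hs.2.ne ?_
  rw [← hH, ← h]
  simp [H]

theorem apply_H (hr : 1 < r) (hω : IsOmega r ω) {z : ℝ} (hz : 1 ≤ z)
    (hHz : H r z ∈ Ioc (0 : ℝ) 1) : ω (H r z) = z :=
  have ⟨⟨hle, _⟩, hH⟩ := hω (H r z) hHz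
  (strictAntiOn_H hr).injOn hle hz hH

theorem hasDerivAt (hr : 1 < r) (hω : IsOmega r ω) (hs : s ∈ Ioo (0 : ℝ) 1) :
    HasDerivAt ω (r * (r - 1) * ω s ^ (r - 2) * (1 - ω s))⁻¹ s := by
  have hone : 1 < ω s := hω.one_lt_apply hs
  have hpos : 0 < ω s := zero_lt_one.trans hone
  have hH : H r (ω s) = s := (hω s (Ioo_subset_Ioc_self hs)).2
  have hderiv := hasStrictDerivAt_H r hpos.ne'
  have hne : r * (r - 1) * ω s ^ (r - 2) * (1 - ω s) ≠ 0 :=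
    mul_ne_zero (mul_ne_zero (mul_ne_zero (by linarith) (by linarith))
      (rpow_pos_of_pos hpos _).ne') (by linarith)
  have hleft : ∀ᶠ z in 𝓝 (ω s), ω (H r z) = z := by
    have hmem : ∀ᶠ z in 𝓝 (ω s), H r z ∈ Ioo (0 : ℝ) 1 :=
      hderiv.hasDerivAt.continuousAt.eventually_mem (isOpen_Ioo.mem_nhds (by rwa [hH]))
    filter_upwards [hmem, lt_mem_nhds hone] with z hHz hz
    exact hω.apply_H hr hz.le (Ioo_subset_Ioc_self hHz)
  simpa only [hH] using (hderiv.to_local_left_inverse hne hleft).hasDerivAt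

theorem hasDerivAt_mul_genH (p : ℝ) (hr : 1 < r) (hω : IsOmega r ω) (hs : s ∈ Ioo (0 : ℝ) 1) :
    HasDerivAt (fun x => r * genH p r (ω x)) (genHSlope p r (ω s)) s := by
  have hone : 1 < ω s := hω.one_lt_apply hs
  have hpos : 0 < ω s := zero_lt_one.trans hone
  refine (((hasStrictDerivAt_genH p r hpos.ne').hasDerivAt.comp s
    (hω.hasDerivAt hr hs)).const_mul r).congr_deriv ?_
  have hr0 : r ≠ 0 := by linarith
  have hr1 : r - 1 ≠ 0 := by linarith
  have hω1 : 1 - ω s ≠ 0 := by linarith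
  have hpow : ω s ^ (r - 2) ≠ 0 := (rpow_pos_of_pos hpos _).ne'
  rw [genHSlope]
  field_simp

theorem hasDerivAt_rpow (hr : 1 < r) (hω : IsOmega r ω) (hs : s ∈ Ioo (0 : ℝ) 1) :
    HasDerivAt (fun x => ω x ^ r) (-(ω s / ((r - 1) * (ω s - 1)))) s := by
  have hone : 1 < ω s := hω.one_lt_apply hs
  have hpos : 0 < ω s := zero_lt_one.trans hone
  refine ((hω.hasDerivAt hr hs).rpow_const (p := r) (Or.inl hpos.ne')).congr_deriv ?_
  have hr0 : r ≠ 0 := by linarith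
  have hr1 : r - 1 ≠ 0 := by linarith
  have hω1 : 1 - ω s ≠ 0 := by linarith
  have hpow : ω s ^ (r - 2) ≠ 0 := (rpow_pos_of_pos hpos _).ne'
  rw [rpow_eq_rpow_sub_one_mul hpos.ne' (r - 1), show r - 1 - 1 = r - 2 by ring,
    ← neg_sub 1 (ω s)]
  field_simp

theorem hasDerivAt_rpow_div (hr : 1 < r) (hω : IsOmega r ω) (hs : s ∈ Ioo (0 : ℝ) 1) :
    HasDerivAt (fun x => ω x ^ r / x) (-Afun r ω s / s ^ 2) s := by
  have hs0 : s ≠ 0 := hs.1.ne'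
  refine ((hω.hasDerivAt_rpow hr hs).div (hasDerivAt_id s) hs0).congr_deriv ?_
  simp only [Afun, id]
  field_simp
  ring

end IsOmega

section Tau

theorem ne_zero_of_tau_ne_zero {p q s₁ s₂ x : ℝ} (h : tau p q s₁ s₂ x ≠ 0) :
    p ≠ 0 ∧ x ^ (p - q) - s₁ / s₂ ≠ 0 := by
  constructor <;> intro h0 <;> simp [tau, h0] at h

variable {p q s₁ s t' : ℝ} {t : ℝ → ℝ}

theorem hasDerivAt_rpow_const_sub_div (r c : ℝ) (ht : HasDerivAt t t' s) (ht0 : t s ≠ 0)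
    (hs : s ≠ 0) :
    HasDerivAt (fun x => t x ^ r - c / x) (t' * r * t s ^ (r - 1) + c / s ^ 2) s := by
  refine ((ht.rpow_const (p := r) (Or.inl ht0)).sub
    ((hasDerivAt_inv hs).const_mul c)).congr_deriv ?_
  ring

theorem hasDerivAt_tau (hp : p ≠ 0) (hs : s ≠ 0) (ht : HasDerivAt t t' s) (ht0 : 0 < t s)
    (hD : t s ^ (p - q) - s₁ / s ≠ 0) :
    HasDerivAt (fun x => tau p q s₁ x (t x))
      (((t s ^ q - tau p q s₁ s (t s)) * (t' * (p - q) * t s ^ (p - q - 1))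
        - tau p q s₁ s (t s) * (s₁ / s ^ 2)) / (t s ^ (p - q) - s₁ / s)) s := by
  have hDderiv := hasDerivAt_rpow_const_sub_div (p - q) s₁ ht ht0.ne' hs
  refine ((((ht.rpow_const (p := p) (Or.inl ht0.ne')).sub_const s₁).div hDderiv hD).const_mul
    ((p - q) / p)).congr_deriv ?_
  have hpow : t s ^ (p - 1) = t s ^ (p - q - 1) * t s ^ q := by
    rw [← rpow_add ht0]
    ring_nf
  rw [hpow, tau]
  generalize t s ^ (p - q) - s₁ / s = D at hD
  field_simp
  ring

end Tau

theorem IsOmega.deriv_defining_equation {p q s₁ s t' : ℝ} {ω t : ℝ → ℝ} (hq : 1 < q)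
    (hω : IsOmega q ω) (hs : s ∈ Ioo (0 : ℝ) 1) (ht : HasDerivAt t t' s) (ht0 : 0 < t s)
    (hτ : tau p q s₁ s (t s) ∈ Ioo (0 : ℝ) 1)
    (heq : ∀ᶠ x in 𝓝 s,
      q * genH p q (ω (tau p q s₁ x (t x))) * (t x ^ (p - q) - s₁ / x)
        = (p - q) * s₁ * (ω x ^ q / x - 1)) :
    genHSlope p q (ω (tau p q s₁ s (t s)))
          * ((t s ^ q - tau p q s₁ s (t s)) * (t' * (p - q) * t s ^ (p - q - 1))
            - tau p q s₁ s (t s) * (s₁ / s ^ 2))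
        + q * genH p q (ω (tau p q s₁ s (t s)))
          * (t' * (p - q) * t s ^ (p - q - 1) + s₁ / s ^ 2)
      = (p - q) * s₁ * (-Afun q ω s / s ^ 2) := by
  obtain ⟨hp, hD⟩ := ne_zero_of_tau_ne_zero hτ.1.ne'
  have hs0 : s ≠ 0 := hs.1.ne'
  have hlhs := ((hω.hasDerivAt_mul_genH p hq hτ).comp s (hasDerivAt_tau hp hs0 ht ht0 hD)).mul
    (hasDerivAt_rpow_const_sub_div (p - q) s₁ ht ht0.ne' hs0)
  have hrhs := ((hω.hasDerivAt_rpow_div hq hs).sub_const 1).const_mul ((p - q) * s₁)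
  have hderiv := hlhs.unique (hrhs.congr_of_eventuallyEq heq)
  rwa [← mul_div_assoc, div_mul_cancel₀ _ hD] at hderiv

theorem stmt_14_general {p q s₁ s t' : ℝ} {ω t : ℝ → ℝ} (hq : 1 < q) (hω : IsOmega q ω)
    (hs : s ∈ Ioo (0 : ℝ) 1) (ht : HasDerivAt t t' s) (ht0 : 0 < t s)
    (hτ : tau p q s₁ s (t s) ∈ Ioo (0 : ℝ) 1)
    (heq : ∀ᶠ x in 𝓝 s,
      q * genH p q (ω (tau p q s₁ x (t x))) * (t x ^ (p - q) - s₁ / x)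
        = (p - q) * s₁ * (ω x ^ q / x - 1)) :
    t' * (p - q) * t s ^ (p - q - 1)
        * (q * (p - (p - 1) * ω (tau p q s₁ s (t s))) * ω (tau p q s₁ s (t s)) ^ (q - 1)
          + (p - (q * (p - 1) / (q - 1)) * ω (tau p q s₁ s (t s)))
            * (tau p q s₁ s (t s) - t s ^ q) / (ω (tau p q s₁ s (t s)) - 1))
      = (s₁ / s ^ 2) * Ffun p q ω (tau p q s₁ s (t s))
        - (p - q) * (s₁ / s) * (ω s / ((q - 1) * (ω s - 1)) + ω s ^ q / s) := by
  have hω0 : ω (tau p q s₁ s (t s)) ≠ 0 := (zero_lt_one.trans (hω.one_lt_apply hτ)).ne'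
  have hA : s₁ / s * (ω s / ((q - 1) * (ω s - 1)) + ω s ^ q / s) = s₁ * (Afun q ω s / s ^ 2) := by
    have hs0 : s ≠ 0 := hs.1.ne'
    rw [Afun]
    field_simp
  have hderiv := hω.deriv_defining_equation hq hs ht ht0 hτ heq
  rw [genHSlope] at hderiv
  rw [Ffun_eq_mul_genHSlope_sub, genHSlope, mul_assoc (p - q), hA, mul_assoc q,
    ← genH_eq_mul_rpow p q hω0, ← neg_sub 1 (ω (tau p q s₁ s (t s))), div_neg]
  linear_combination hderiv

/-- the differentiated identity (2.10):
`t′(s₂)·(p−q)·t(s₂)^(p−q−1)·Δ₁(s₂)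
  = (s₁/s₂²)·F(τ(s₂)) − (p−q)·(s₁/s₂)·(ω_q(s₂)/((q−1)(ω_q(s₂)−1)) + ω_q(s₂)^q/s₂)`. -/
theorem stmt_14 (p q : ℝ) (hq : 1 < q) (hqp : q < p)
    (ωq : ℝ → ℝ) (hωq : IsOmega q ωq)
    (s₁ : ℝ) (hs₁ : s₁ ∈ Set.Ioo (0 : ℝ) 1)
    (a b : ℝ) (hJ : Set.Ioo a b ⊆ Set.Ioo (s₁ ^ ((q - 1) / (p - 1))) 1)
    (t : ℝ → ℝ)
    (hdiff : ∀ s₂ ∈ Set.Ioo a b, DifferentiableAt ℝ t s₂)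
    (hrange : ∀ s₂ ∈ Set.Ioo a b, 1 ≤ t s₂)
    (htau : ∀ s₂ ∈ Set.Ioo a b, tau p q s₁ s₂ (t s₂) ∈ Set.Ioo (0 : ℝ) 1)
    (heq : ∀ s₂ ∈ Set.Ioo a b,
      q * (p * ωq (tau p q s₁ s₂ (t s₂)) ^ (q - 1)
            - (p - 1) * ωq (tau p q s₁ s₂ (t s₂)) ^ q)
          * (t s₂ ^ (p - q) - s₁ / s₂)
        = (p - q) * s₁ * (ωq s₂ ^ q / s₂ - 1)) :
    ∀ s₂ ∈ Set.Ioo a b,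
      deriv t s₂ * (p - q) * t s₂ ^ (p - q - 1)
          * (q * (p - (p - 1) * ωq (tau p q s₁ s₂ (t s₂)))
                * ωq (tau p q s₁ s₂ (t s₂)) ^ (q - 1)
              + (p - (q * (p - 1) / (q - 1)) * ωq (tau p q s₁ s₂ (t s₂)))
                * (tau p q s₁ s₂ (t s₂) - t s₂ ^ q)
                / (ωq (tau p q s₁ s₂ (t s₂)) - 1))
        = (s₁ / s₂ ^ 2) * Ffun p q ωq (tau p q s₁ s₂ (t s₂))
          - (p - q) * (s₁ / s₂)
            * (ωq s₂ / ((q - 1) * (ωq s₂ - 1)) + ωq s₂ ^ q / s₂) := by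
  intro s hs
  have hs01 : s ∈ Ioo (0 : ℝ) 1 := ⟨(rpow_nonneg hs₁.1.le _).trans_lt (hJ hs).1, (hJ hs).2⟩
  exact stmt_14_general hq hωq hs01 (hdiff s hs).hasDerivAt (zero_lt_one.trans_le (hrange s hs))
    (htau s hs) (Filter.eventually_of_mem (isOpen_Ioo.mem_nhds hs) heq)
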